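/- Let λ ≥ 2 be an integer with λ not divisible by 3, and let X be a λ-normed plane. Then X does not satisfy the second non-uniqueness condition: there do not exist unit vectors x₁, x₂ of the first type and a unit vector x₃ of the zero type, together with norming functionals φ₁, φ₂, φ₃ for x₁, x₂, x₃, such that φ₁ + φ₂ + φ₃ = 0 and x₃ is the only unit vector y with φ₃(y) = 1. -/

import Mathlib

open Real

/-- The vertices of a regular 2λ-gon centered at the origin, with circumradius r and
initial angle θ. -/
noncomputable def polyVerts (lam : ℕ) (r θ : ℝ) : Fin (2 * lam) → ℝ × ℝ :=
  fun k => (r * Real.cos (θ + (k : ℕ) * π / lam), r * Real.sin (θ + (k : ℕ) * π / lam))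

/-- N : ℝ² → ℝ is a norm. -/
def IsNormOn (N : ℝ × ℝ → ℝ) : Prop :=
  (∀ x y : ℝ × ℝ, N (x + y) ≤ N x + N y) ∧
  (∀ (c : ℝ) (x : ℝ × ℝ), N (c • x) = |c| * N x) ∧
  (∀ x : ℝ × ℝ, N x = 0 → x = 0)

/-- N is a λ-plane norm: a norm on ℝ² whose closed unit ball is a regular 2λ-gon
centered at the origin. -/
def IsLambdaNorm (lam : ℕ) (N : ℝ × ℝ → ℝ) : Prop :=
  IsNormOn N ∧ ∃ r > (0 : ℝ), ∃ θ : ℝ,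
    {x : ℝ × ℝ | N x ≤ 1} = convexHull ℝ (Set.range (polyVerts lam r θ))

/-- φ is a norming functional for x with respect to the norm N: the dual norm of φ is
at most one (‖φ‖ ≤ 1, which together with φ x = N x = 1 for the unit vectors considered
gives ‖φ‖ = 1) and φ x = N x. -/
def IsNormingN (N : ℝ × ℝ → ℝ) (φ : (ℝ × ℝ) →ₗ[ℝ] ℝ) (x : ℝ × ℝ) : Prop :=
  (∀ y : ℝ × ℝ, |φ y| ≤ N y) ∧ φ x = N x

/-- A unit vector (w.r.t. N) of the first type: an interior point of a flattening of the
unit circle of N. -/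
def FirstTypeN (N : ℝ × ℝ → ℝ) (x : ℝ × ℝ) : Prop :=
  N x = 1 ∧ ∃ u v : ℝ × ℝ, u ≠ v ∧ N u = 1 ∧ N v = 1 ∧
    x ∈ openSegment ℝ u v ∧ ∀ z ∈ segment ℝ u v, N z = 1

/-- A unit vector (w.r.t. N) of the zero type: not of the first type. -/
def ZeroTypeN (N : ℝ × ℝ → ℝ) (x : ℝ × ℝ) : Prop :=
  N x = 1 ∧ ¬ FirstTypeN N x

/-- The Fermat–Torricelli set of a finite tuple of points of ℝ² with respect to the
norm N. -/
def ftSetN (N : ℝ × ℝ → ℝ) {n : ℕ} (x : Fin n → ℝ × ℝ) : Set (ℝ × ℝ) :=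
  {p | ∀ q : ℝ × ℝ, ∑ i, N (p - x i) ≤ ∑ i, N (q - x i)}

/-!
A functional norming a first-type vector equals `1` at two vertices of the unit polygon at least, so
it is the supporting functional of an edge. Write `α = π / (2λ)`. The sum of two edge functionals is
a multiple of the inner product with a unit vector `e` at an angle to the vertices that is a
multiple of `α`, so reflection in the line `ℝe` preserves both the vertices and that sum. If minus
the sum takes the value `1` at exactly one vertex, this vertex is fixed by the reflection, hence
lies on `ℝe`, and comparing lengths gives `|2 cos (mα)| = |cos α|` for an integer `m`. The left side
is an algebraic integer. But every conjugate of `cos α` lies in the unit disc, being a root of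
`T_{4λ} - 1` with `T` the Chebyshev polynomial, so by Kronecker's theorem the number `cos α ∈ (0,
1)` is not an algebraic integer.
-/

open Polynomial.Chebyshev in
theorem norm_le_one_of_eval_chebyshev_T_eq_one {n : ℤ} (hn : n ≠ 0) {w : ℂ}
    (hw : (T ℂ n).eval w = 1) : ‖w‖ ≤ 1 := by
  obtain ⟨z, rfl⟩ := Complex.cos_surjective w
  rw [T_complex_cos, Complex.cos_eq_one_iff] at hw
  obtain ⟨k, hk⟩ := hw
  have hz : z = ((k * (2 * π) / n : ℝ) : ℂ) := by
    push_cast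
    rw [hk, mul_div_cancel_left₀ _ (Int.cast_ne_zero.mpr hn)]
  rw [hz, ← Complex.ofReal_cos, Complex.norm_real]
  exact abs_cos_le_one _

open Polynomial.Chebyshev IntermediateField in
theorem eq_zero_or_pow_eq_one_of_eval_chebyshev_T_eq_one {n : ℤ} (hn : n ≠ 0) {a : ℝ}
    (ha : IsIntegral ℤ a) (hT : (T ℝ n).eval a = 1) : a = 0 ∨ ∃ m ≠ 0, a ^ m = 1 := by
  refine or_iff_not_imp_left.mpr fun ha₀ ↦ ?_
  let : NumberField ℚ⟮a⟯ :=
    { to_charZero := inferInstance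
      to_finiteDimensional := adjoin.finiteDimensional ha.tower_top }
  let b : ℚ⟮a⟯ := AdjoinSimple.gen ℚ a
  have hb : algebraMap ℚ⟮a⟯ ℝ b = a := AdjoinSimple.algebraMap_gen ℚ a
  have hinj : Function.Injective (algebraMap ℚ⟮a⟯ ℝ) := (algebraMap ℚ⟮a⟯ ℝ).injective
  have hb₀ : b ≠ 0 := by
    intro h
    exact ha₀ (by rw [← hb, h, map_zero])
  have hb_int : IsIntegral ℤ b := (isIntegral_algebraMap_iff hinj).mp (by rwa [hb])
  have hbT : (T ℚ⟮a⟯ n).eval b = 1 := hinj <| by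
    rw [map_one, ← Polynomial.eval_map_apply, map_T, hb, hT]
  obtain ⟨m, hm, hbm⟩ := NumberField.Embeddings.pow_eq_one_of_norm_le_one ℚ⟮a⟯ ℂ hb₀ hb_int
    fun ψ ↦ norm_le_one_of_eval_chebyshev_T_eq_one hn <| by
      rw [← map_T ψ, Polynomial.eval_map_apply, hbT, map_one]
  exact ⟨m, hm.ne', by rw [← hb, ← map_pow, hbm, map_one]⟩

theorem cos_rat_mul_pi_eq_zero_or_abs_eq_one_of_isIntegral {q : ℚ}
    (h : IsIntegral ℤ (cos (q * π))) : cos (q * π) = 0 ∨ |cos (q * π)| = 1 := by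
  have hT : (Polynomial.Chebyshev.T ℝ (2 * q.den : ℤ)).eval (cos (q * π)) = 1 := by
    rw [Polynomial.Chebyshev.T_real_cos, cos_eq_one_iff]
    refine ⟨q.num, ?_⟩
    have hq : (q : ℝ) * q.den = q.num := by exact_mod_cast q.mul_den_eq_num
    push_cast
    linear_combination -2 * π * hq
  refine (eq_zero_or_pow_eq_one_of_eval_chebyshev_T_eq_one (by positivity) h hT).imp_right ?_
  rintro ⟨m, hm, hpow⟩
  refine (pow_eq_one_iff_of_nonneg (abs_nonneg _) hm).mp ?_
  rw [← abs_pow, hpow, abs_one]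

section Face

variable {𝕜 E : Type*} [Field 𝕜] [LinearOrder 𝕜] [IsStrictOrderedRing 𝕜]
  [AddCommGroup E] [Module 𝕜 E] {f : E →ₗ[𝕜] 𝕜} {c : 𝕜}

theorem eq_and_eq_of_mem_openSegment_of_le {u v x : E} (hu : f u ≤ c) (hv : f v ≤ c)
    (hx : x ∈ openSegment 𝕜 u v) (hfx : f x = c) : f u = c ∧ f v = c := by
  obtain ⟨a, b, ha, hb, hab, rfl⟩ := hx
  simp only [map_add, map_smul, smul_eq_mul] at hfx
  have hsum : a * (c - f u) + b * (c - f v) = 0 := by linear_combination c * hab - hfx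
  obtain ⟨hau, hbv⟩ := (add_eq_zero_iff_of_nonneg (mul_nonneg ha.le (sub_nonneg.mpr hu))
    (mul_nonneg hb.le (sub_nonneg.mpr hv))).mp hsum
  exact ⟨(sub_eq_zero.mp ((mul_eq_zero_iff_left ha.ne').mp hau)).symm,
    (sub_eq_zero.mp ((mul_eq_zero_iff_left hb.ne').mp hbv)).symm⟩

theorem mem_convexHull_setOf_eq_of_forall_le {S : Set E} (hS : ∀ s ∈ S, f s ≤ c) {x : E}
    (hx : x ∈ convexHull 𝕜 S) (hfx : f x = c) : x ∈ convexHull 𝕜 {s ∈ S | f s = c} := by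
  let face := convexHull 𝕜 {s ∈ S | f s = c}
  have hconv : Convex 𝕜 {y | f y ≤ c ∧ (f y = c → y ∈ face)} := by
    refine convex_iff_openSegment_subset.mpr fun u hu v hv y hy ↦
      ⟨(convex_halfSpace_le f.isLinear c).openSegment_subset hu.1 hv.1 hy, fun hfy ↦ ?_⟩
    obtain ⟨hfu, hfv⟩ := eq_and_eq_of_mem_openSegment_of_le hu.1 hv.1 hy hfy
    exact (convex_convexHull 𝕜 _).openSegment_subset (hu.2 hfu) (hv.2 hfv) hy
  have hsub : S ⊆ {y | f y ≤ c ∧ (f y = c → y ∈ face)} :=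
    fun s hs ↦ ⟨hS s hs, fun h ↦ subset_convexHull 𝕜 _ ⟨hs, h⟩⟩
  exact (convexHull_min hsub hconv hx).2 hfx

end Face

section PolygonalNorm

variable {N : ℝ × ℝ → ℝ} {S : Set (ℝ × ℝ)} {φ : (ℝ × ℝ) →ₗ[ℝ] ℝ} {x : ℝ × ℝ}

theorem IsNormingN.apply_le (hφ : IsNormingN N φ x) (y : ℝ × ℝ) : φ y ≤ N y :=
  (le_abs_self _).trans (hφ.1 y)

theorem norm_le_one_of_mem_of_ball_eq (hball : {y | N y ≤ 1} = convexHull ℝ S) {s : ℝ × ℝ}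
    (hs : s ∈ S) : N s ≤ 1 :=
  hball.ge (subset_convexHull ℝ S hs)

theorem IsNormingN.apply_le_one (hφ : IsNormingN N φ x)
    (hball : {y | N y ≤ 1} = convexHull ℝ S) {s : ℝ × ℝ} (hs : s ∈ S) : φ s ≤ 1 :=
  (hφ.apply_le s).trans (norm_le_one_of_mem_of_ball_eq hball hs)

theorem IsNormingN.mem_convexHull_face (hφ : IsNormingN N φ x)
    (hball : {y | N y ≤ 1} = convexHull ℝ S) {y : ℝ × ℝ} (hy : N y = 1) (hφy : φ y = 1) :
    y ∈ convexHull ℝ {s ∈ S | φ s = 1} :=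
  mem_convexHull_setOf_eq_of_forall_le (fun _ ↦ hφ.apply_le_one hball) (hball.le hy.le) hφy

theorem FirstTypeN.nontrivial_face (hx : FirstTypeN N x) (hφ : IsNormingN N φ x)
    (hball : {y | N y ≤ 1} = convexHull ℝ S) : {s ∈ S | φ s = 1}.Nontrivial := by
  obtain ⟨hNx, u, v, huv, hu, hv, hxuv, -⟩ := hx
  obtain ⟨hφu, hφv⟩ := eq_and_eq_of_mem_openSegment_of_le (hu ▸ hφ.apply_le u)
    (hv ▸ hφ.apply_le v) hxuv (hφ.2.trans hNx)
  by_contra hface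
  have hconv : Convex ℝ {s ∈ S | φ s = 1} := (Set.not_nontrivial_iff.mp hface).convex
  have hmem (y : ℝ × ℝ) (hy : N y = 1) (hφy : φ y = 1) : y ∈ {s ∈ S | φ s = 1} :=
    hconv.convexHull_eq.le (hφ.mem_convexHull_face hball hy hφy)
  exact hface ⟨u, hmem u hu hφu, v, hmem v hv hφv, huv⟩

theorem IsNormingN.exists_forall_eq_of_forall_eq {ι : Type*} {V : ι → ℝ × ℝ}
    (hφ : IsNormingN N φ x) (hball : {y | N y ≤ 1} = convexHull ℝ (Set.range V)) (hx : N x = 1)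
    (huniq : ∀ y, N y = 1 → φ y = 1 → y = x) :
    ∃ k, φ (V k) = 1 ∧ ∀ l, φ (V l) = 1 → V l = V k := by
  have heq (l : ι) (hl : φ (V l) = 1) : V l = x :=
    huniq _ ((norm_le_one_of_mem_of_ball_eq hball ⟨l, rfl⟩).antisymm (hl ▸ hφ.apply_le _)) hl
  obtain ⟨_, ⟨k, rfl⟩, hk⟩ :=
    convexHull_nonempty_iff.mp ⟨x, hφ.mem_convexHull_face hball hx (hφ.2.trans hx)⟩
  exact ⟨k, hk, fun l hl ↦ (heq l hl).trans (heq k hk).symm⟩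

end PolygonalNorm

section Circle

/-- The point of the Euclidean unit circle at angle `t`. -/
noncomputable def circlePoint (t : ℝ) : ℝ × ℝ :=
  (cos t, sin t)

/-- The Euclidean inner product with `circlePoint s`; every functional on `ℝ × ℝ` is a multiple of
one of these. -/
noncomputable def circleForm (s : ℝ) : (ℝ × ℝ) →ₗ[ℝ] ℝ :=
  cos s • LinearMap.fst ℝ ℝ ℝ + sin s • LinearMap.snd ℝ ℝ ℝ

theorem circleForm_circlePoint (s t : ℝ) : circleForm s (circlePoint t) = cos (t - s) := by
  simp only [circleForm, circlePoint, LinearMap.add_apply, LinearMap.smul_apply,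
    LinearMap.fst_apply, LinearMap.snd_apply, smul_eq_mul, cos_sub]
  ring

theorem circlePoint_eq_iff {s t : ℝ} :
    circlePoint s = circlePoint t ↔ ∃ p : ℤ, s - t = 2 * π * p := by
  rw [← Real.Angle.angle_eq_iff_two_pi_dvd_sub]
  refine ⟨fun h ↦ Real.Angle.cos_sin_inj (congrArg Prod.fst h) (congrArg Prod.snd h), fun h ↦ ?_⟩
  simp only [circlePoint, ← Real.Angle.cos_coe, ← Real.Angle.sin_coe, h]

theorem circleForm_periodic : Function.Periodic circleForm (2 * π) := fun s ↦ by
  simp only [circleForm, cos_add_two_pi, sin_add_two_pi]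

theorem circleForm_add_circleForm (s t : ℝ) :
    circleForm s + circleForm t = (2 * cos ((s - t) / 2)) • circleForm ((s + t) / 2) := by
  simp only [circleForm, smul_add, smul_smul]
  rw [add_add_add_comm, ← add_smul, ← add_smul, cos_add_cos, sin_add_sin]
  ring_nf

theorem exists_eq_smul_circleForm (φ : (ℝ × ℝ) →ₗ[ℝ] ℝ) (b : ℝ) :
    ∃ A ≥ (0 : ℝ), ∃ t, |t| ≤ π ∧ φ = A • circleForm (b - t) := by
  let w : ℂ := ⟨φ (1, 0), φ (0, 1)⟩
  have hφ : φ = ‖w‖ • circleForm w.arg := by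
    ext
    · simp [circleForm, w]
    · simp [circleForm, w]
  obtain ⟨s, hs, hws⟩ := circleForm_periodic.exists_mem_Ioc two_pi_pos w.arg (b - π)
  refine ⟨‖w‖, norm_nonneg w, b - s, abs_le.mpr ⟨?_, ?_⟩, ?_⟩
  · linarith [hs.2]
  · linarith [hs.1]
  · rw [hφ, hws, sub_sub_cancel]

theorem abs_le_of_cos_add_le_of_cos_sub_le {t δ : ℝ} (hδ : 0 < δ) (ht : |t| ≤ π)
    (hadd : cos (t + 2 * δ) ≤ cos t) (hsub : cos (t - 2 * δ) ≤ cos t) : |t| ≤ δ := by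
  have key : ∀ y, cos y ≤ cos t → |t| ≤ |y| := fun y hy ↦ by
    by_contra! hlt
    have := cos_lt_cos_of_nonneg_of_le_pi (abs_nonneg y) ht hlt
    rw [cos_abs, cos_abs] at this
    exact this.not_ge hy
  have hadd' := key _ hadd
  have hsub' := key _ hsub
  grind

end Circle

section RegularPolygon

/-- Half the angle between consecutive vertices of the regular `2λ`-gon. -/
noncomputable def halfStep (lam : ℕ) : ℝ :=
  π / (2 * lam)

/-- The vertices of the regular `2λ`-gon, indexed by `ℤ` rather than `Fin (2 * λ)` so that the
dihedral symmetries act on the index by affine maps. -/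
noncomputable def polygonVertex (lam : ℕ) (r θ : ℝ) (k : ℤ) : ℝ × ℝ :=
  r • circlePoint (θ + 2 * k * halfStep lam)

/-- The functional equal to `1` along the edge of the regular `2λ`-gon that joins the vertices `n`
and `n + 1`. -/
noncomputable def edgeForm (lam : ℕ) (r θ : ℝ) (n : ℤ) : (ℝ × ℝ) →ₗ[ℝ] ℝ :=
  (r * cos (halfStep lam))⁻¹ • circleForm (θ + (2 * n + 1) * halfStep lam)

variable {lam : ℕ} {r θ : ℝ}

theorem two_mul_mul_halfStep (hlam : lam ≠ 0) : 2 * lam * halfStep lam = π := by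
  rw [halfStep]
  field_simp

theorem halfStep_pos (hlam : lam ≠ 0) : 0 < halfStep lam := by
  rw [halfStep]
  positivity

theorem halfStep_lt_pi_div_two (hlam : 2 ≤ lam) : halfStep lam < π / 2 := by
  have hlam' : (2 : ℝ) ≤ lam := by exact_mod_cast hlam
  rw [halfStep]
  gcongr
  linarith

theorem abs_two_mul_cos_ne_abs_cos_halfStep (hlam : 2 ≤ lam) (m : ℤ) :
    |2 * cos (m * halfStep lam)| ≠ |cos (halfStep lam)| := by
  intro h
  have hpos := halfStep_pos (lam := lam) (by omega)
  have hlt := halfStep_lt_pi_div_two hlam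
  have hcos_pos : 0 < cos (halfStep lam) := cos_pos_of_mem_Ioo ⟨by linarith, hlt⟩
  have hcos_lt : cos (halfStep lam) < 1 := by
    simpa using cos_lt_cos_of_nonneg_of_le_pi_div_two le_rfl hlt.le hpos
  have hm : m * halfStep lam = ((m / (2 * lam) : ℚ) : ℝ) * π := by
    rw [halfStep]
    push_cast
    ring
  have hq : halfStep lam = ((1 / (2 * lam) : ℚ) : ℝ) * π := by
    rw [halfStep]
    push_cast
    ring
  have hint : IsIntegral ℤ (cos (halfStep lam)) := by
    have := isIntegral_two_mul_cos_rat_mul_pi (m / (2 * lam))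
    rw [← hm] at this
    rcases abs_eq_abs.mp h with h | h
    · exact h ▸ this
    · exact neg_eq_iff_eq_neg.mpr h ▸ this.neg
  rw [hq] at hint hcos_pos hcos_lt
  rcases cos_rat_mul_pi_eq_zero_or_abs_eq_one_of_isIntegral hint with h₀ | h₁
  · exact hcos_pos.ne' h₀
  · exact hcos_lt.ne (abs_of_pos hcos_pos ▸ h₁)

theorem polygonVertex_eq_of_modEq (hlam : lam ≠ 0) {i j : ℤ} (h : i ≡ j [ZMOD 2 * lam]) :
    polygonVertex lam r θ i = polygonVertex lam r θ j := by
  obtain ⟨p, hp⟩ := h.symm.dvd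
  have hp' : (i - j : ℝ) = 2 * lam * p := by exact_mod_cast hp
  have : circlePoint (θ + 2 * i * halfStep lam) = circlePoint (θ + 2 * j * halfStep lam) :=
    circlePoint_eq_iff.mpr ⟨p, by
      linear_combination 2 * halfStep lam * hp' + 2 * p * two_mul_mul_halfStep hlam⟩
  rw [polygonVertex, polygonVertex, this]

theorem modEq_of_polygonVertex_eq (hlam : lam ≠ 0) (hr : r ≠ 0) {i j : ℤ}
    (h : polygonVertex lam r θ i = polygonVertex lam r θ j) : i ≡ j [ZMOD 2 * lam] := by
  obtain ⟨p, hp⟩ := circlePoint_eq_iff.mp (smul_right_injective _ hr h)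
  have hij : ((i - j : ℤ) : ℝ) = (2 * lam * p : ℤ) := by
    push_cast
    refine mul_right_cancel₀ (halfStep_pos hlam).ne' ?_
    linear_combination hp / 2 - p * two_mul_mul_halfStep hlam
  exact (Int.modEq_iff_dvd.mpr ⟨p, by exact_mod_cast hij⟩).symm

theorem range_polyVerts_eq_range_polygonVertex (hlam : lam ≠ 0) :
    Set.range (polyVerts lam r θ) = Set.range (polygonVertex lam r θ) := by
  have hcoe (k : Fin (2 * lam)) : polyVerts lam r θ k = polygonVertex lam r θ (k : ℕ) := by
    have : θ + (k : ℕ) * π / lam = θ + 2 * ((k : ℕ) : ℤ) * halfStep lam := by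
      rw [halfStep]
      push_cast
      ring
    simp only [polyVerts, polygonVertex, circlePoint, this, Prod.smul_mk, smul_eq_mul]
  refine Set.Subset.antisymm ?_ ?_
  · rintro _ ⟨k, rfl⟩
    exact ⟨_, (hcoe k).symm⟩
  · rintro _ ⟨k, rfl⟩
    have hnonneg := Int.emod_nonneg k (b := 2 * lam) (by positivity)
    have hlt := Int.emod_lt_of_pos k (b := 2 * lam) (by positivity)
    refine ⟨⟨(k % (2 * lam)).toNat, by omega⟩, ?_⟩
    rw [hcoe, Int.toNat_of_nonneg hnonneg]
    exact polygonVertex_eq_of_modEq hlam (Int.mod_modEq _ _)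

theorem circleForm_polygonVertex (s : ℝ) (k : ℤ) :
    circleForm s (polygonVertex lam r θ k) = r * cos (θ + 2 * k * halfStep lam - s) := by
  rw [polygonVertex, map_smul, circleForm_circlePoint, smul_eq_mul]

theorem eq_halfStep_or_eq_neg_halfStep (hlam : lam ≠ 0) {t : ℝ} (ht : |t| ≤ halfStep lam) {m : ℤ}
    (hm : ¬ (2 * lam : ℤ) ∣ m) (h : cos (t + 2 * m * halfStep lam) = cos t) :
    t = halfStep lam ∨ t = -halfStep lam := by
  have hα := halfStep_pos hlam
  have hπ := two_mul_mul_halfStep hlam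
  obtain ⟨p, hp | hp⟩ := cos_eq_cos_iff.mp h
  · have : (m : ℝ) = (2 * lam * -p : ℤ) := by
      push_cast
      refine mul_right_cancel₀ hα.ne' ?_
      linear_combination -hp / 2 + p * hπ
    exact absurd ⟨-p, by exact_mod_cast this⟩ hm
  · obtain ⟨q, hq⟩ : ∃ q : ℤ, q = 2 * lam * p - m := ⟨_, rfl⟩
    have hq' : (q : ℝ) = 2 * lam * p - m := by exact_mod_cast hq
    have htq : t = q * halfStep lam := by linear_combination hp / 2 - halfStep lam * hq' - p * hπ
    have hq₀ : q ≠ 0 := by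
      rintro rfl
      exact hm ⟨p, by linarith⟩
    have hq₁ : |q| ≤ 1 := by
      rw [htq, abs_mul, abs_of_pos hα, mul_le_iff_le_one_left hα] at ht
      exact_mod_cast ht
    rcases Int.abs_le_one_iff.mp hq₁ with rfl | rfl | rfl
    · exact absurd rfl hq₀
    · left; simpa using htq
    · right; simpa using htq

theorem exists_eq_edgeForm_of_nontrivial_face (hlam : lam ≠ 0) (hr : 0 < r) {φ : (ℝ × ℝ) →ₗ[ℝ] ℝ}
    (hle : ∀ s ∈ Set.range (polygonVertex lam r θ), φ s ≤ 1)
    (hface : {s ∈ Set.range (polygonVertex lam r θ) | φ s = 1}.Nontrivial) :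
    ∃ n, φ = edgeForm lam r θ n := by
  obtain ⟨_, ⟨⟨i, rfl⟩, hi⟩, _, ⟨⟨j, rfl⟩, hj⟩, hij⟩ := hface
  obtain ⟨A, hA, t, ht, rfl⟩ := exists_eq_smul_circleForm φ (θ + 2 * i * halfStep lam)
  have hval (m : ℤ) : (A • circleForm (θ + 2 * i * halfStep lam - t))
      (polygonVertex lam r θ (i + m)) = A * r * cos (t + 2 * m * halfStep lam) := by
    rw [LinearMap.smul_apply, circleForm_polygonVertex, smul_eq_mul, mul_assoc]
    push_cast
    ring_nf
  have hAt : A * r * cos t = 1 := by simpa [hi] using (hval 0).symm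
  have hAr : 0 < A * r := by
    refine (mul_nonneg hA hr.le).lt_of_ne fun h ↦ ?_
    simp [← h] at hAt
  have hmax (m : ℤ) : cos (t + 2 * m * halfStep lam) ≤ cos t := by
    refine le_of_mul_le_mul_left ?_ hAr
    rw [← hval, hAt]
    exact hle _ ⟨_, rfl⟩
  have hcos : cos (t + 2 * (j - i : ℤ) * halfStep lam) = cos t := by
    refine mul_left_cancel₀ hAr.ne' ?_
    rw [← hval, hAt, add_sub_cancel, hj]
  have hdvd : ¬ (2 * lam : ℤ) ∣ j - i :=
    fun h ↦ hij (polygonVertex_eq_of_modEq hlam (Int.modEq_iff_dvd.mpr h))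
  have htα : |t| ≤ halfStep lam :=
    abs_le_of_cos_add_le_of_cos_sub_le (halfStep_pos hlam) ht (by simpa using hmax 1)
      (by simpa [← sub_eq_add_neg] using hmax (-1))
  have hA_eq (hcos_t : cos t = cos (halfStep lam)) : A = (r * cos (halfStep lam))⁻¹ :=
    eq_inv_of_mul_eq_one_left (by rw [← mul_assoc, ← hcos_t, hAt])
  rcases eq_halfStep_or_eq_neg_halfStep hlam htα hdvd hcos with rfl | rfl
  · refine ⟨i - 1, ?_⟩
    rw [edgeForm, ← hA_eq rfl]
    push_cast
    ring_nf
  · refine ⟨i, ?_⟩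
    rw [edgeForm, ← hA_eq (cos_neg _)]
    ring_nf

theorem FirstTypeN.exists_eq_edgeForm {N : ℝ × ℝ → ℝ} {φ : (ℝ × ℝ) →ₗ[ℝ] ℝ} {x : ℝ × ℝ}
    (hx : FirstTypeN N x) (hφ : IsNormingN N φ x) (hlam : lam ≠ 0) (hr : 0 < r)
    (hball : {y | N y ≤ 1} = convexHull ℝ (Set.range (polygonVertex lam r θ))) :
    ∃ n, φ = edgeForm lam r θ n :=
  exists_eq_edgeForm_of_nontrivial_face hlam hr (fun _ ↦ hφ.apply_le_one hball)
    (hx.nontrivial_face hφ hball)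

theorem edgeForm_add_edgeForm (m n : ℤ) :
    edgeForm lam r θ m + edgeForm lam r θ n =
      (2 * cos ((m - n : ℤ) * halfStep lam) / (r * cos (halfStep lam))) •
        circleForm (θ + (m + n + 1 : ℤ) * halfStep lam) := by
  rw [edgeForm, edgeForm, ← smul_add, circleForm_add_circleForm, smul_smul, div_eq_inv_mul]
  push_cast
  ring_nf

theorem abs_mul_eq_one_of_forall_apply_eq_one (hlam : lam ≠ 0) (hr : r ≠ 0) {c : ℝ} {m k : ℤ}
    (hk : c * circleForm (θ + m * halfStep lam) (polygonVertex lam r θ k) = 1)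
    (huniq : ∀ l, c * circleForm (θ + m * halfStep lam) (polygonVertex lam r θ l) = 1 →
      polygonVertex lam r θ l = polygonVertex lam r θ k) :
    |c * r| = 1 := by
  simp only [circleForm_polygonVertex, ← mul_assoc] at hk huniq
  -- The reflection in the line at angle `θ + m * halfStep lam` sends the vertex `k` to `m - k`.
  have hrefl : polygonVertex lam r θ (m - k) = polygonVertex lam r θ k := by
    refine huniq _ ?_
    rw [← hk, ← cos_neg]
    push_cast
    ring_nf
  obtain ⟨p, hp⟩ := (modEq_of_polygonVertex_eq hlam hr hrefl).dvd
  have hp' : (k - (m - k) : ℝ) = 2 * lam * p := by exact_mod_cast hp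
  have hangle : θ + 2 * k * halfStep lam - (θ + m * halfStep lam) = p * π := by
    linear_combination halfStep lam * hp' + p * two_mul_mul_halfStep hlam
  rw [← abs_one (α := ℝ), ← hk, hangle, abs_mul (c * r), abs_cos_int_mul_pi, mul_one]

end RegularPolygon

theorem lambda_plane_no_second_condition_general
    (lam : ℕ) (hlam : 2 ≤ lam) (N : ℝ × ℝ → ℝ) (hN : IsLambdaNorm lam N) :
    ¬ ∃ (x₁ x₂ x₃ : ℝ × ℝ) (φ₁ φ₂ φ₃ : (ℝ × ℝ) →ₗ[ℝ] ℝ),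
        FirstTypeN N x₁ ∧ FirstTypeN N x₂ ∧ N x₃ = 1 ∧
        IsNormingN N φ₁ x₁ ∧ IsNormingN N φ₂ x₂ ∧ IsNormingN N φ₃ x₃ ∧
        φ₁ + φ₂ + φ₃ = 0 ∧
        (∀ y : ℝ × ℝ, N y = 1 → φ₃ y = 1 → y = x₃) := by
  rintro ⟨x₁, x₂, x₃, φ₁, φ₂, φ₃, hx₁, hx₂, hx₃, hφ₁, hφ₂, hφ₃, hsum, huniq⟩
  obtain ⟨-, r, hr, θ, hball⟩ := hN
  have hlam₀ : lam ≠ 0 := by omega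
  rw [range_polyVerts_eq_range_polygonVertex hlam₀] at hball
  obtain ⟨n₁, rfl⟩ := hx₁.exists_eq_edgeForm hφ₁ hlam₀ hr hball
  obtain ⟨n₂, rfl⟩ := hx₂.exists_eq_edgeForm hφ₂ hlam₀ hr hball
  obtain ⟨k, hk, hk_uniq⟩ := hφ₃.exists_forall_eq_of_forall_eq hball hx₃ huniq
  rw [eq_neg_of_add_eq_zero_right hsum, edgeForm_add_edgeForm] at hk hk_uniq
  simp only [LinearMap.neg_apply, LinearMap.smul_apply, smul_eq_mul, ← neg_mul] at hk hk_uniq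
  have hcr := abs_mul_eq_one_of_forall_apply_eq_one hlam₀ hr.ne' hk hk_uniq
  have hcos : cos (halfStep lam) ≠ 0 := by
    intro h
    simp [h] at hcr
  refine abs_two_mul_cos_ne_abs_cos_halfStep hlam (n₁ - n₂) ?_
  rwa [neg_mul, abs_neg, div_mul_eq_mul_div, mul_comm r, mul_div_mul_right _ _ hr.ne', abs_div,
    div_eq_one_iff_eq (abs_ne_zero.mpr hcos)] at hcr

/-- If λ is not divisible by 3, a λ-normed plane does not satisfy the second
non-uniqueness condition. -/
theorem lambda_plane_no_second_condition
    (lam : ℕ) (hlam : 2 ≤ lam) (h3 : ¬ 3 ∣ lam)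
    (N : ℝ × ℝ → ℝ) (hN : IsLambdaNorm lam N) :
    ¬ ∃ (x₁ x₂ x₃ : ℝ × ℝ) (φ₁ φ₂ φ₃ : (ℝ × ℝ) →ₗ[ℝ] ℝ),
        FirstTypeN N x₁ ∧ FirstTypeN N x₂ ∧ ZeroTypeN N x₃ ∧
        IsNormingN N φ₁ x₁ ∧ IsNormingN N φ₂ x₂ ∧ IsNormingN N φ₃ x₃ ∧
        φ₁ + φ₂ + φ₃ = 0 ∧
        (∀ y : ℝ × ℝ, N y = 1 → φ₃ y = 1 → y = x₃) := by
  rintro ⟨x₁, x₂, x₃, φ₁, φ₂, φ₃, hx₁, hx₂, hx₃, h⟩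
  exact lambda_plane_no_second_condition_general lam hlam N hN
    ⟨x₁, x₂, x₃, φ₁, φ₂, φ₃, hx₁, hx₂, hx₃.1, h⟩
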